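/- arXiv:1701.02580 — 5 statements merged into one kernel-verified Lean document; each statement's English description precedes it below -/
import Mathlib

section
/- For any complex numbers z1, z2, z4 and any z ∈ ℂ, the quantity N(z) = (z2-z)·(z4-z)·conj(z1-z)·conj(z4-z2) + (z1-z)·(z2-z)·conj(z4-z)·conj(z2-z1) + (z1-z)·(z4-z)·conj(z2-z)·conj(z1-z4) is purely imaginary, i.e. conj(N(z)) = -N(z). -/
open ComplexConjugate

/-- the quantity `N(z)` is purely imaginary: `conj (N z) = - N z`. -/
theorem N_purely_imaginary (z1 z2 z4 : ℂ) (z : ℂ) :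
    conj ((z2 - z) * (z4 - z) * conj (z1 - z) * conj (z4 - z2)
        + (z1 - z) * (z2 - z) * conj (z4 - z) * conj (z2 - z1)
        + (z1 - z) * (z4 - z) * conj (z2 - z) * conj (z1 - z4))
    = -((z2 - z) * (z4 - z) * conj (z1 - z) * conj (z4 - z2)
        + (z1 - z) * (z2 - z) * conj (z4 - z) * conj (z2 - z1)
        + (z1 - z) * (z4 - z) * conj (z2 - z) * conj (z1 - z4)) := by
  simp only [map_add, map_sub, map_mul, Complex.conj_conj]
  ring
end

section
/- Let V be a real vector space and let a12, a14, a23, a34, a24 and b12, b13, b14, b23, b34 be linear forms on V satisfying the four vertex relations (as identities of linear forms): a12 + a14 = b12 + b13 + b14; a12 + a23 + a24 = b12 + b23; a23 + a34 = b13 + b23 + b34; and a14 + a34 + a24 = b14 + b34. Then for any real numbers t12, t14, t23, t34, the following identity of linear forms holds: (t14 + t23 - t12 - t34)·(a12 - b12) + (t14 + t23)·a24 = (1/2)·[ (t12 + t34)·(b12 - a12 + b34 - a34) + (t14 + t23)·(b14 - a14 + b23 - a23) ]. -/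
/-- the dihedrally symmetric rewriting of the discontinuity `u - u'` of the
U(1) connection at a flip, as an identity of linear forms on a real vector space. -/
theorem flip_discontinuity_symmetric_form
    (V : Type*) [AddCommGroup V] [Module ℝ V]
    (a12 a14 a23 a34 a24 b12 b13 b14 b23 b34 : V →ₗ[ℝ] ℝ)
    (h1 : a12 + a14 = b12 + b13 + b14)
    (h2 : a12 + a23 + a24 = b12 + b23)
    (h3 : a23 + a34 = b13 + b23 + b34)
    (h4 : a14 + a34 + a24 = b14 + b34)
    (t12 t14 t23 t34 : ℝ) :
    (t14 + t23 - t12 - t34) • (a12 - b12) + (t14 + t23) • a24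
      = (1 / 2 : ℝ) • ((t12 + t34) • (b12 - a12 + b34 - a34)
          + (t14 + t23) • (b14 - a14 + b23 - a23)) := by
  ext v
  have e1 := LinearMap.congr_fun h1 v
  have e2 := LinearMap.congr_fun h2 v
  have e3 := LinearMap.congr_fun h3 v
  have e4 := LinearMap.congr_fun h4 v
  simp only [LinearMap.add_apply, LinearMap.sub_apply, LinearMap.smul_apply, smul_eq_mul]
    at e1 e2 e3 e4 ⊢
  have f1 : a34 v = b34 v - (b12 v - a12 v) := by linarith
  have f2 : a14 v = b14 v - (b23 v - a23 v) := by linarith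
  have f3 : a24 v = b12 v - a12 v + (b23 v - a23 v) := by linarith
  rw [f1, f2, f3]
  ring
end

section
/- Let z1, z2, z3 be pairwise distinct complex numbers. For u = (u1,u2,u3) ∈ ℂ³ set w_{ij}(u) = (u_j - u_i)/(z_j - z_i). Then for all u, u' ∈ ℂ³: Σ_{cyc} [ Im w_{12}(u)·Im w_{23}(u') - Im w_{12}(u')·Im w_{23}(u) ] = Σ_{cyc} [ Re w_{12}(u)·Re w_{23}(u') - Re w_{12}(u')·Re w_{23}(u) ], where Σ_{cyc} denotes the sum over the cyclic permutations (1,2,3) → (2,3,1) → (3,1,2) of the indices. In other words, the 2-forms ω_angle = (1/4)(dϑ12∧dϑ23 + dϑ23∧dϑ31 + dϑ31∧dϑ12) and ω_length = (1/4)(dλ12∧dλ23 + dλ23∧dλ31 + dλ31∧dλ12) are equal. -/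
open ComplexConjugate

/-- Value on the tangent vector with components `ui, uj` of the complex 1-form
`d log (z_j - z_i)` : `w_{ij}(u) = (u_j - u_i)/(z_j - z_i)`. -/
noncomputable def wform (zi zj ui uj : ℂ) : ℂ := (uj - ui) / (zj - zi)

/-- `ω_angle = ω_length` for a face: the cyclic sum of products of
imaginary parts equals the cyclic sum of products of real parts. -/
theorem angle_form_eq_length_form (z1 z2 z3 : ℂ)
    (h12 : z1 ≠ z2) (h13 : z1 ≠ z3) (h23 : z2 ≠ z3)
    (u1 u2 u3 v1 v2 v3 : ℂ) :
    ((wform z1 z2 u1 u2).im * (wform z2 z3 v2 v3).im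
        - (wform z1 z2 v1 v2).im * (wform z2 z3 u2 u3).im)
      + ((wform z2 z3 u2 u3).im * (wform z3 z1 v3 v1).im
        - (wform z2 z3 v2 v3).im * (wform z3 z1 u3 u1).im)
      + ((wform z3 z1 u3 u1).im * (wform z1 z2 v1 v2).im
        - (wform z3 z1 v3 v1).im * (wform z1 z2 u1 u2).im)
    = ((wform z1 z2 u1 u2).re * (wform z2 z3 v2 v3).re
        - (wform z1 z2 v1 v2).re * (wform z2 z3 u2 u3).re)
      + ((wform z2 z3 u2 u3).re * (wform z3 z1 v3 v1).re
        - (wform z2 z3 v2 v3).re * (wform z3 z1 u3 u1).re)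
      + ((wform z3 z1 u3 u1).re * (wform z1 z2 v1 v2).re
        - (wform z3 z1 v3 v1).re * (wform z1 z2 u1 u2).re) := by
  have e12 : z2 - z1 ≠ 0 := sub_ne_zero.mpr h12.symm
  have e23 : z3 - z2 ≠ 0 := sub_ne_zero.mpr h23.symm
  have e31 : z1 - z3 ≠ 0 := sub_ne_zero.mpr h13
  -- Arnold's relation for the complex logarithmic forms
  have key : (wform z1 z2 u1 u2 * wform z2 z3 v2 v3
        - wform z1 z2 v1 v2 * wform z2 z3 u2 u3)
      + (wform z2 z3 u2 u3 * wform z3 z1 v3 v1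
        - wform z2 z3 v2 v3 * wform z3 z1 u3 u1)
      + (wform z3 z1 u3 u1 * wform z1 z2 v1 v2
        - wform z3 z1 v3 v1 * wform z1 z2 u1 u2) = 0 := by
    unfold wform
    field_simp
    ring
  have hre := congrArg Complex.re key
  simp only [Complex.add_re, Complex.sub_re, Complex.mul_re, Complex.zero_re] at hre
  linarith
end

section
/- Let z1, z2, z3 be pairwise distinct complex numbers. For u = (u1,u2,u3) ∈ ℂ³ set w_{ij}(u) = (u_j - u_i)/(z_j - z_i). Then for all u, u' ∈ ℂ³: (1/8)·Σ_{cyc} [ w_{23}(u)·conj(w_{31}(u')) - w_{23}(u')·conj(w_{31}(u)) + conj(w_{23}(u))·w_{31}(u') - conj(w_{23}(u'))·w_{31}(u) ] = (1/2)·Σ_{cyc} [ Re w_{12}(u)·Re w_{23}(u') - Re w_{12}(u')·Re w_{23}(u) ], where Σ_{cyc} denotes the sum over the cyclic permutations (1,2,3) → (2,3,1) → (3,1,2) of the indices. That is, the Delaunay face 2-form satisfies ω_D = (1/2)(dλ12∧dλ23 + dλ23∧dλ31 + dλ31∧dλ12). -/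
open ComplexConjugate

/-- The Arnold relation for the three forms `d log (z_j - z_i)`. -/
lemma wform_arnold (z1 z2 z3 : ℂ)
    (h12 : z1 ≠ z2) (h13 : z1 ≠ z3) (h23 : z2 ≠ z3)
    (u1 u2 u3 v1 v2 v3 : ℂ) :
    (wform z1 z2 u1 u2 * wform z2 z3 v2 v3 - wform z1 z2 v1 v2 * wform z2 z3 u2 u3)
    + (wform z2 z3 u2 u3 * wform z3 z1 v3 v1 - wform z2 z3 v2 v3 * wform z3 z1 u3 u1)
    + (wform z3 z1 u3 u1 * wform z1 z2 v1 v2 - wform z3 z1 v3 v1 * wform z1 z2 u1 u2) = 0 := by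
  have a : z2 - z1 ≠ 0 := sub_ne_zero.mpr h12.symm
  have b : z3 - z2 ≠ 0 := sub_ne_zero.mpr h23.symm
  have c : z1 - z3 ≠ 0 := sub_ne_zero.mpr h13
  unfold wform
  field_simp
  ring

/-- the Delaunay face 2-form satisfies
`ω_D = (1/2)(dλ12∧dλ23 + dλ23∧dλ31 + dλ31∧dλ12)`. -/
theorem delaunay_face_form_eq_half_length (z1 z2 z3 : ℂ)
    (h12 : z1 ≠ z2) (h13 : z1 ≠ z3) (h23 : z2 ≠ z3)
    (u1 u2 u3 v1 v2 v3 : ℂ) :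
    (1 / 8 : ℂ) *
      ((wform z2 z3 u2 u3 * conj (wform z3 z1 v3 v1)
          - wform z2 z3 v2 v3 * conj (wform z3 z1 u3 u1)
          + conj (wform z2 z3 u2 u3) * wform z3 z1 v3 v1
          - conj (wform z2 z3 v2 v3) * wform z3 z1 u3 u1)
        + (wform z3 z1 u3 u1 * conj (wform z1 z2 v1 v2)
          - wform z3 z1 v3 v1 * conj (wform z1 z2 u1 u2)
          + conj (wform z3 z1 u3 u1) * wform z1 z2 v1 v2
          - conj (wform z3 z1 v3 v1) * wform z1 z2 u1 u2)
        + (wform z1 z2 u1 u2 * conj (wform z2 z3 v2 v3)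
          - wform z1 z2 v1 v2 * conj (wform z2 z3 u2 u3)
          + conj (wform z1 z2 u1 u2) * wform z2 z3 v2 v3
          - conj (wform z1 z2 v1 v2) * wform z2 z3 u2 u3))
    = ((1 / 2 : ℝ) *
        (((wform z1 z2 u1 u2).re * (wform z2 z3 v2 v3).re
            - (wform z1 z2 v1 v2).re * (wform z2 z3 u2 u3).re)
          + ((wform z2 z3 u2 u3).re * (wform z3 z1 v3 v1).re
            - (wform z2 z3 v2 v3).re * (wform z3 z1 u3 u1).re)
          + ((wform z3 z1 u3 u1).re * (wform z1 z2 v1 v2).re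
            - (wform z3 z1 v3 v1).re * (wform z1 z2 u1 u2).re)) : ℂ) := by
  have A := wform_arnold z1 z2 z3 h12 h13 h23 u1 u2 u3 v1 v2 v3
  have B := congrArg conj A
  simp only [map_add, map_sub, map_mul, map_zero] at B
  simp only [Complex.re_eq_add_conj]
  push_cast
  linear_combination (-1 / 8 : ℂ) * A + (-1 / 8 : ℂ) * B
end

section
/- Let a, b, c be real numbers with 0 ≤ a ≤ π/2, 0 ≤ b ≤ π/2, 0 ≤ c ≤ π/2. Then the two-dimensional Lebesgue measure of the region { (x,y) ∈ ℝ² : -a ≤ x ≤ π/2, -b ≤ y ≤ π/2, 0 ≤ x + y ≤ π/2 + c } equals π²/8 + (1/2)·( a·(π - a) + b·(π - b) + c·(π - c) ). -/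
open Real MeasureTheory

/-- the Lebesgue area of the region
`{(x,y) : -a ≤ x ≤ π/2, -b ≤ y ≤ π/2, 0 ≤ x + y ≤ π/2 + c}` for
`a, b, c ∈ [0, π/2]` equals `π²/8 + (1/2)(a(π-a) + b(π-b) + c(π-c))`. -/
theorem area_angle_region (a b c : ℝ)
    (ha0 : 0 ≤ a) (ha : a ≤ π / 2)
    (hb0 : 0 ≤ b) (hb : b ≤ π / 2)
    (hc0 : 0 ≤ c) (hc : c ≤ π / 2) :
    volume {p : ℝ × ℝ | -a ≤ p.1 ∧ p.1 ≤ π / 2 ∧ -b ≤ p.2 ∧ p.2 ≤ π / 2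
        ∧ 0 ≤ p.1 + p.2 ∧ p.1 + p.2 ≤ π / 2 + c}
      = ENNReal.ofReal (π ^ 2 / 8
          + 1 / 2 * (a * (π - a) + b * (π - b) + c * (π - c))) := by
  have hmeas : MeasurableSet {p : ℝ × ℝ | -a ≤ p.1 ∧ p.1 ≤ π / 2 ∧ -b ≤ p.2 ∧ p.2 ≤ π / 2
        ∧ 0 ≤ p.1 + p.2 ∧ p.1 + p.2 ≤ π / 2 + c} := by
    measurability
  have hu : Continuous (fun x : ℝ => min (π / 2) (π / 2 + c - x)) := by fun_prop
  have hl : Continuous (fun x : ℝ => max (-b) (-x)) := by fun_prop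
  rw [Measure.volume_eq_prod, Measure.prod_apply hmeas]
  have hslice : ∀ x : ℝ, volume (Prod.mk x ⁻¹' {p : ℝ × ℝ | -a ≤ p.1 ∧ p.1 ≤ π / 2 ∧ -b ≤ p.2
        ∧ p.2 ≤ π / 2 ∧ 0 ≤ p.1 + p.2 ∧ p.1 + p.2 ≤ π / 2 + c})
      = (Set.Icc (-a) (π / 2)).indicator
        (fun x => ENNReal.ofReal (min (π / 2) (π / 2 + c - x) - max (-b) (-x))) x := by
    intro x
    by_cases hx : x ∈ Set.Icc (-a) (π / 2)
    · rw [Set.indicator_of_mem hx, ← Real.volume_Icc]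
      congr 1
      ext y
      simp only [Set.mem_preimage, Set.mem_setOf_eq, Set.mem_Icc, max_le_iff, le_min_iff]
      constructor
      · rintro ⟨h1, h2, h3, h4, h5, h6⟩
        exact ⟨⟨h3, by linarith⟩, h4, by linarith⟩
      · rintro ⟨⟨h1, h2⟩, h3, h4⟩
        exact ⟨hx.1, hx.2, h1, h3, by linarith, by linarith⟩
    · rw [Set.indicator_of_notMem hx]
      convert measure_empty (μ := (volume : Measure ℝ))
      ext y
      simp only [Set.mem_preimage, Set.mem_setOf_eq, Set.mem_empty_iff_false, iff_false]
      rintro ⟨h1, h2, -⟩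
      exact hx ⟨h1, h2⟩
  simp_rw [hslice]
  rw [lintegral_indicator measurableSet_Icc, ← ofReal_integral_eq_lintegral_ofReal]
  · congr 1
    rw [integral_Icc_eq_integral_Ioc, ← intervalIntegral.integral_of_le (by linarith),
      intervalIntegral.integral_sub (hu.intervalIntegrable _ _) (hl.intervalIntegrable _ _),
      ← intervalIntegral.integral_add_adjacent_intervals (b := c)
        (hu.intervalIntegrable _ _) (hu.intervalIntegrable _ _),
      ← intervalIntegral.integral_add_adjacent_intervals (b := b)
        (hl.intervalIntegrable _ _) (hl.intervalIntegrable _ _)]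
    have e1 : ∫ x in (-a)..c, min (π / 2) (π / 2 + c - x) = ∫ x in (-a)..c, π / 2 := by
      apply intervalIntegral.integral_congr
      intro x hx
      rw [Set.uIcc_of_le (by linarith)] at hx
      exact min_eq_left (by linarith [hx.2])
    have e2 : ∫ x in c..(π / 2), min (π / 2) (π / 2 + c - x)
        = ∫ x in c..(π / 2), (π / 2 + c - x) := by
      apply intervalIntegral.integral_congr
      intro x hx
      rw [Set.uIcc_of_le (by linarith)] at hx
      exact min_eq_right (by linarith [hx.1])
    have e3 : ∫ x in (-a)..b, max (-b) (-x) = ∫ x in (-a)..b, -x := by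
      apply intervalIntegral.integral_congr
      intro x hx
      rw [Set.uIcc_of_le (by linarith)] at hx
      exact max_eq_right (by linarith [hx.2])
    have e4 : ∫ x in b..(π / 2), max (-b) (-x) = ∫ x in b..(π / 2), -b := by
      apply intervalIntegral.integral_congr
      intro x hx
      rw [Set.uIcc_of_le (by linarith)] at hx
      exact max_eq_left (by linarith [hx.1])
    rw [e1, e2, e3, e4, intervalIntegral.integral_sub (by simp) (by simp),
      intervalIntegral.integral_neg]
    simp only [intervalIntegral.integral_const, integral_id, smul_eq_mul]
    ring
  · exact (hu.sub hl).continuousOn.integrableOn_Icc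
  · filter_upwards [ae_restrict_mem measurableSet_Icc] with x hx
    have h1 := hx.1
    have h2 := hx.2
    apply sub_nonneg.2
    apply max_le <;> apply le_min <;> linarith
end
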